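/- Let a be an atom and C{ } a context. Every proof in the system KS of the formula C{a} can be transformed into a proof in KS of the formula C{t}. -/

import Mathlib

/-!
Deep-inference systems SKSg, SKS and KS for classical propositional logic
(the calculus of structures).  Formulas are built from atoms `a`, their
negations `ā`, and the units `t` (true) and `f` (false) by disjunction
`[P,Q]` (`dis`) and conjunction `(P,Q)` (`con`), and are considered modulo
the congruence `Equiv` generated by associativity, commutativity and the
unit laws.  Rules apply inside an arbitrary one-hole context and modulo the
equivalence.
-/

namespace DI

/-- Formulas of the calculus of structures for classical logic:
units `t`, `f`; atoms `pos a`; negated atoms `neg a`; disjunction `dis`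
(written `[P,Q]`); conjunction `con` (written `(P,Q)`). -/
inductive F : Type where
  | tt  : F
  | ff  : F
  | pos : ℕ → F
  | neg : ℕ → F
  | dis : F → F → F
  | con : F → F → F
deriving DecidableEq

/-- Negation, pushed to the atoms by the De Morgan laws:
`¬t = f`, `¬f = t`, `¬[P,Q] = (¬P,¬Q)`, `¬(P,Q) = [¬P,¬Q]`, `¬¬P = P`. -/
def F.negF : F → F
  | .tt => .ff
  | .ff => .tt
  | .pos a => .neg a
  | .neg a => .pos a
  | .dis P Q => .con P.negF Q.negF
  | .con P Q => .dis P.negF Q.negF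

/-- Atoms are the propositional symbols and their negations. -/
def F.isAtom : F → Prop
  | .pos _ => True
  | .neg _ => True
  | _ => False

/-- Syntactic equivalence of formulas: the smallest congruence generated by
associativity and commutativity of both connectives and the unit laws
`[t,t]=t`, `(f,f)=f`, `[f,P]=P`, `(t,P)=P`. -/
inductive Equiv : F → F → Prop where
  | refl (P : F) : Equiv P P
  | symm {P Q : F} : Equiv P Q → Equiv Q P
  | trans {P Q R : F} : Equiv P Q → Equiv Q R → Equiv P R
  | disComm (P Q : F) : Equiv (.dis P Q) (.dis Q P)
  | conComm (P Q : F) : Equiv (.con P Q) (.con Q P)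
  | disAssoc (P Q R : F) : Equiv (.dis (.dis P Q) R) (.dis P (.dis Q R))
  | conAssoc (P Q R : F) : Equiv (.con (.con P Q) R) (.con P (.con Q R))
  | ttDis : Equiv (.dis .tt .tt) .tt
  | ffCon : Equiv (.con .ff .ff) .ff
  | ffDis (P : F) : Equiv (.dis .ff P) P
  | ttCon (P : F) : Equiv (.con .tt P) P
  | disCongr {P P' Q Q' : F} :
      Equiv P P' → Equiv Q Q' → Equiv (.dis P Q) (.dis P' Q')
  | conCongr {P P' Q Q' : F} :
      Equiv P P' → Equiv Q Q' → Equiv (.con P Q) (.con P' Q')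

/-- One-hole contexts. -/
inductive Ctx : Type where
  | hole : Ctx
  | disL : Ctx → F → Ctx
  | disR : F → Ctx → Ctx
  | conL : Ctx → F → Ctx
  | conR : F → Ctx → Ctx

/-- Plugging a formula into the hole of a context. -/
def Ctx.fill : Ctx → F → F
  | .hole, P => P
  | .disL C Q, P => .dis (C.fill P) Q
  | .disR Q C, P => .dis Q (C.fill P)
  | .conL C Q, P => .con (C.fill P) Q
  | .conR Q C, P => .con Q (C.fill P)

/-- Names of the inference rules of SKSg and SKS. -/
inductive Rule : Type where
  | iDown | iUp | wDown | wUp | cDown | cUp | s | m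
  | aiDown | aiUp | awDown | awUp | acDown | acUp
deriving DecidableEq

/-- The rules, read at the root of a formula (premise on the left,
conclusion on the right). -/
inductive RootStep : Rule → F → F → Prop where
  | iDown (P : F) : RootStep .iDown .tt (.dis P P.negF)
  | iUp (P : F) : RootStep .iUp (.con P P.negF) .ff
  | wDown (P : F) : RootStep .wDown .ff P
  | wUp (P : F) : RootStep .wUp P .tt
  | cDown (P : F) : RootStep .cDown (.dis P P) P
  | cUp (P : F) : RootStep .cUp P (.con P P)
  | s (P Q R : F) : RootStep .s (.con P (.dis Q R)) (.dis (.con P Q) R)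
  | m (P Q R S : F) :
      RootStep .m (.dis (.con P Q) (.con R S)) (.con (.dis P R) (.dis Q S))
  | aiDown (A : F) (h : A.isAtom) : RootStep .aiDown .tt (.dis A A.negF)
  | aiUp (A : F) (h : A.isAtom) : RootStep .aiUp (.con A A.negF) .ff
  | awDown (A : F) (h : A.isAtom) : RootStep .awDown .ff A
  | awUp (A : F) (h : A.isAtom) : RootStep .awUp A .tt
  | acDown (A : F) (h : A.isAtom) : RootStep .acDown (.dis A A) A
  | acUp (A : F) (h : A.isAtom) : RootStep .acUp A (.con A A)

/-- One inference step using a rule from the set `Rs`, applied inside an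
arbitrary context and modulo the equivalence. -/
def Step (Rs : Set Rule) (P Q : F) : Prop :=
  ∃ r ∈ Rs, ∃ (C : Ctx) (P' Q' : F),
    RootStep r P' Q' ∧ Equiv P (C.fill P') ∧ Equiv (C.fill Q') Q

/-- Derivations over an arbitrary step relation: a finite sequence of rule
instances from the premise to the conclusion (modulo the equivalence). -/
inductive Deriv (St : F → F → Prop) : F → F → Prop where
  | eqv {P Q : F} : Equiv P Q → Deriv St P Q
  | step {P Q R : F} : St P Q → Deriv St Q R → Deriv St P R

/-- The system SKSg: general (non-atomic) rules plus switch. -/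
def SKSg : Set Rule := {.iDown, .iUp, .wDown, .wUp, .cDown, .cUp, .s}

/-- The system SKS: atomic rules plus switch and medial. -/
def SKS : Set Rule := {.aiDown, .aiUp, .awDown, .awUp, .acDown, .acUp, .s, .m}

/-- The system KS: the down fragment of SKS. -/
def KS : Set Rule := {.aiDown, .awDown, .acDown, .s, .m}

/-- A proof of `Q` in the system `Rs` is a derivation from the unit `t` to `Q`. -/
def Proof (Rs : Set Rule) (Q : F) : Prop := Deriv (Step Rs) .tt Q

/-- A rule `r` is derivable from a set `Rs` of rules if every instance of `r`
(with premise `P` and conclusion `Q`) can be replaced by a derivation from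
`P` to `Q` using only rules of `Rs`. -/
def RuleDerivable (r : Rule) (Rs : Set Rule) : Prop :=
  ∀ P Q : F, Step {r} P Q → Deriv (Step Rs) P Q

end DI

namespace DI

/-!
Trace the chosen occurrence upwards through the proof, replacing it by `t` on the way.  A
contraction splits the trace in two and an identity or a weakening ends it, so several atom
occurrences have to be replaced at once.  Each rule instance stays derivable after the replacement:
an identity `t → [a,ā]` turns into `t = [t,f] → [t,ā]`, a weakening `f → a` into
`f = (f,[t,t]) → [(f,t),t] = t`, a contraction into `[t,t] = t`, and switch and medial are linear.
The topmost formula `t` contains no atoms, so there nothing is left to replace.  In an arbitrary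
formula in place of the atom all atoms are replaced; what remains is built from units only and
derives `t`.
-/

/-- A preorder on formulas that is compatible with both connectives: the common structure of
syntactic equivalence, derivability, replacement of atoms and liftability of such replacements. -/
structure IsPrecongruence (R : F → F → Prop) : Prop where
  refl (P : F) : R P P
  trans {P Q S : F} : R P Q → R Q S → R P S
  disCongr {P P' Q Q' : F} : R P P' → R Q Q' → R (.dis P Q) (.dis P' Q')
  conCongr {P P' Q Q' : F} : R P P' → R Q Q' → R (.con P Q) (.con P' Q')

theorem IsPrecongruence.fill {R : F → F → Prop} (hR : IsPrecongruence R) {P Q : F} (h : R P Q) :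
    ∀ C : Ctx, R (C.fill P) (C.fill Q)
  | .hole => h
  | .disL C S => hR.disCongr (hR.fill h C) (hR.refl S)
  | .disR S C => hR.disCongr (hR.refl S) (hR.fill h C)
  | .conL C S => hR.conCongr (hR.fill h C) (hR.refl S)
  | .conR S C => hR.conCongr (hR.refl S) (hR.fill h C)

theorem Equiv.isPrecongruence : IsPrecongruence Equiv :=
  ⟨.refl, .trans, .disCongr, .conCongr⟩

theorem Equiv.disFf (P : F) : Equiv (.dis P .ff) P :=
  (disComm P .ff).trans (ffDis P)

theorem Equiv.conTt (P : F) : Equiv (.con P .tt) P :=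
  (conComm P .tt).trans (ttCon P)

/-- Composition of contexts: `C.comp D` is `C{D{ }}`. -/
def Ctx.comp : Ctx → Ctx → Ctx
  | .hole, D => D
  | .disL C Q, D => .disL (C.comp D) Q
  | .disR Q C, D => .disR Q (C.comp D)
  | .conL C Q, D => .conL (C.comp D) Q
  | .conR Q C, D => .conR Q (C.comp D)

theorem Ctx.fill_comp (C D : Ctx) (P : F) : (C.comp D).fill P = C.fill (D.fill P) := by
  induction C <;> simp_all [comp, fill]

section Derivations

variable {Rs : Set Rule} {P Q R : F}

theorem Step.of_equiv_left (e : Equiv P Q) : Step Rs Q R → Step Rs P R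
  | ⟨r, hr, C, Q', R', hroot, hQ, hR⟩ => ⟨r, hr, C, Q', R', hroot, e.trans hQ, hR⟩

theorem Step.fill (h : Step Rs P Q) (C : Ctx) : Step Rs (C.fill P) (C.fill Q) := by
  obtain ⟨r, hr, D, P', Q', hroot, hP, hQ⟩ := h
  refine ⟨r, hr, C.comp D, P', Q', hroot, ?_, ?_⟩ <;> rw [Ctx.fill_comp]
  · exact Equiv.isPrecongruence.fill hP C
  · exact Equiv.isPrecongruence.fill hQ C

theorem Deriv.of_equiv_left (e : Equiv P Q) : Deriv (Step Rs) Q R → Deriv (Step Rs) P R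
  | .eqv e' => .eqv (e.trans e')
  | .step h d => .step (h.of_equiv_left e) d

theorem Deriv.trans (d : Deriv (Step Rs) P Q) (d' : Deriv (Step Rs) Q R) :
    Deriv (Step Rs) P R := by
  induction d with
  | eqv e => exact d'.of_equiv_left e
  | step h _ ih => exact .step h (ih d')

theorem Deriv.fill (d : Deriv (Step Rs) P Q) (C : Ctx) :
    Deriv (Step Rs) (C.fill P) (C.fill Q) := by
  induction d with
  | eqv e => exact .eqv (Equiv.isPrecongruence.fill e C)
  | step h _ ih => exact .step (h.fill C) ih

theorem Deriv.isPrecongruence : IsPrecongruence (Deriv (Step Rs)) where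
  refl P := .eqv (.refl P)
  trans := .trans
  disCongr {_ P' Q _} d d' := (d.fill (.disL .hole Q)).trans (d'.fill (.disR P' .hole))
  conCongr {_ P' Q _} d d' := (d.fill (.conL .hole Q)).trans (d'.fill (.conR P' .hole))

theorem Deriv.of_rootStep {r : Rule} (hr : r ∈ Rs) (h : RootStep r P Q) : Deriv (Step Rs) P Q :=
  .step ⟨r, hr, .hole, P, Q, h, .refl P, .refl Q⟩ (.eqv (.refl Q))

theorem Deriv.rel_of_isPrecongruence {S : F → F → Prop} (hS : IsPrecongruence S)
    (equiv : ∀ {P Q}, Equiv P Q → S P Q)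
    (rootStep : ∀ {r P Q}, r ∈ Rs → RootStep r P Q → S P Q)
    (d : Deriv (Step Rs) P Q) : S P Q := by
  induction d with
  | eqv e => exact equiv e
  | step h _ ih =>
    obtain ⟨r, hr, C, P', Q', hroot, hP, hQ⟩ := h
    have inContext : S (C.fill P') (C.fill Q') := hS.fill (rootStep hr hroot) C
    exact hS.trans (equiv hP) (hS.trans inContext (hS.trans (equiv hQ) ih))

theorem Deriv.ff_tt (hs : .s ∈ Rs) : Deriv (Step Rs) .ff .tt := by
  have expand : Equiv .ff (.con .ff (.dis .tt .tt)) :=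
    ((Equiv.conCongr (.refl .ff) .ttDis).trans (.conTt .ff)).symm
  have collapse : Equiv (.dis (.con .ff .tt) .tt) .tt :=
    (Equiv.disCongr (.conTt .ff) (.refl .tt)).trans (.ffDis .tt)
  exact .step ⟨.s, hs, .hole, _, _, .s .ff .tt .tt, expand, collapse⟩ (.eqv (.refl .tt))

theorem Deriv.dis_atom (haw : .awDown ∈ Rs) (P : F) {A : F} (hA : A.isAtom) :
    Deriv (Step Rs) P (.dis P A) :=
  .of_equiv_left (Equiv.disFf P).symm ((of_rootStep haw (.awDown A hA)).fill (.disR P .hole))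

theorem Deriv.atom_dis (haw : .awDown ∈ Rs) {A : F} (hA : A.isAtom) (P : F) :
    Deriv (Step Rs) P (.dis A P) :=
  (dis_atom haw P hA).trans (.eqv (.disComm P A))

end Derivations

/-- `AtomsToTrue P P'`: the formula `P'` arises from `P` by replacing any number of atom
occurrences by `t`.  Replacing different atoms simultaneously is allowed, so the relation has no
atom as a parameter. -/
inductive AtomsToTrue : F → F → Prop where
  | tt : AtomsToTrue .tt .tt
  | ff : AtomsToTrue .ff .ff
  | pos (a : ℕ) : AtomsToTrue (.pos a) (.pos a)
  | neg (a : ℕ) : AtomsToTrue (.neg a) (.neg a)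
  | posTt (a : ℕ) : AtomsToTrue (.pos a) .tt
  | negTt (a : ℕ) : AtomsToTrue (.neg a) .tt
  | dis {P P' Q Q' : F} :
      AtomsToTrue P P' → AtomsToTrue Q Q' → AtomsToTrue (.dis P Q) (.dis P' Q')
  | con {P P' Q Q' : F} :
      AtomsToTrue P P' → AtomsToTrue Q Q' → AtomsToTrue (.con P Q) (.con P' Q')

namespace AtomsToTrue

theorem refl : ∀ P : F, AtomsToTrue P P
  | .tt => .tt
  | .ff => .ff
  | .pos a => .pos a
  | .neg a => .neg a
  | .dis P Q => .dis (refl P) (refl Q)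
  | .con P Q => .con (refl P) (refl Q)

theorem trans {P Q R : F} : AtomsToTrue P Q → AtomsToTrue Q R → AtomsToTrue P R
  | .tt, h | .ff, h | .pos _, h | .neg _, h => h
  | .posTt a, .tt => .posTt a
  | .negTt a, .tt => .negTt a
  | .dis h₁ h₂, .dis k₁ k₂ => .dis (h₁.trans k₁) (h₂.trans k₂)
  | .con h₁ h₂, .con k₁ k₂ => .con (h₁.trans k₁) (h₂.trans k₂)

theorem isPrecongruence : IsPrecongruence AtomsToTrue :=
  ⟨refl, trans, dis, con⟩

theorem eq_or_eq_tt {A A' : F} : AtomsToTrue A A' → A.isAtom → A' = A ∨ A' = .tt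
  | .pos _, _ | .neg _, _ => .inl rfl
  | .posTt _, _ | .negTt _, _ => .inr rfl

end AtomsToTrue

theorem exists_atomsToTrue_deriv_tt {Rs : Set Rule} (hs : .s ∈ Rs) :
    ∀ P : F, ∃ P', AtomsToTrue P P' ∧ Deriv (Step Rs) P' .tt
  | .tt => ⟨.tt, .tt, .eqv (.refl .tt)⟩
  | .ff => ⟨.ff, .ff, .ff_tt hs⟩
  | .pos a => ⟨.tt, .posTt a, .eqv (.refl .tt)⟩
  | .neg a => ⟨.tt, .negTt a, .eqv (.refl .tt)⟩
  | .dis P Q =>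
    let ⟨P', hP, dP⟩ := exists_atomsToTrue_deriv_tt hs P
    let ⟨Q', hQ, dQ⟩ := exists_atomsToTrue_deriv_tt hs Q
    ⟨.dis P' Q', .dis hP hQ, (Deriv.isPrecongruence.disCongr dP dQ).trans (.eqv .ttDis)⟩
  | .con P Q =>
    let ⟨P', hP, dP⟩ := exists_atomsToTrue_deriv_tt hs P
    let ⟨Q', hQ, dQ⟩ := exists_atomsToTrue_deriv_tt hs Q
    ⟨.con P' Q', .con hP hQ, (Deriv.isPrecongruence.conCongr dP dQ).trans (.eqv (.ttCon .tt))⟩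

/-- `Lifts R P Q`: every replacement of atoms by `t` in the conclusion `Q` comes from one in the
premise `P`, in such a way that the results are related by `R`.  It is used with `R` syntactic
equivalence or derivability. -/
def Lifts (R : F → F → Prop) (P Q : F) : Prop :=
  ∀ Q', AtomsToTrue Q Q' → ∃ P', AtomsToTrue P P' ∧ R P' Q'

theorem Lifts.mono {R S : F → F → Prop} (hRS : ∀ {P Q}, R P Q → S P Q) {P Q : F}
    (h : Lifts R P Q) : Lifts S P Q := fun Q' hQ =>
  let ⟨P', hP, r⟩ := h Q' hQ
  ⟨P', hP, hRS r⟩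

theorem IsPrecongruence.lifts {R : F → F → Prop} (hR : IsPrecongruence R) :
    IsPrecongruence (Lifts R) where
  refl _ P' hP := ⟨P', hP, hR.refl P'⟩
  trans h₁ h₂ S' hS :=
    let ⟨Q', hQ, r₂⟩ := h₂ S' hS
    let ⟨P', hP, r₁⟩ := h₁ Q' hQ
    ⟨P', hP, hR.trans r₁ r₂⟩
  disCongr
    | h₁, h₂, _, .dis hP hQ =>
      let ⟨_, hP', r₁⟩ := h₁ _ hP
      let ⟨_, hQ', r₂⟩ := h₂ _ hQ
      ⟨_, .dis hP' hQ', hR.disCongr r₁ r₂⟩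
  conCongr
    | h₁, h₂, _, .con hP hQ =>
      let ⟨_, hP', r₁⟩ := h₁ _ hP
      let ⟨_, hQ', r₂⟩ := h₂ _ hQ
      ⟨_, .con hP' hQ', hR.conCongr r₁ r₂⟩

-- The two directions are proved together because of the constructor `Equiv.symm`.
theorem Equiv.lifts_and_lifts_symm {P Q : F} (e : Equiv P Q) :
    Lifts Equiv P Q ∧ Lifts Equiv Q P := by
  have hL : IsPrecongruence (Lifts Equiv) := isPrecongruence.lifts
  induction e with
  | refl P => exact ⟨hL.refl P, hL.refl P⟩
  | symm _ ih => exact ih.symm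
  | trans _ _ ih₁ ih₂ => exact ⟨hL.trans ih₁.1 ih₂.1, hL.trans ih₂.2 ih₁.2⟩
  | disComm P Q =>
    exact ⟨fun | _, .dis hQ hP => ⟨_, .dis hP hQ, .disComm _ _⟩,
      fun | _, .dis hP hQ => ⟨_, .dis hQ hP, .disComm _ _⟩⟩
  | conComm P Q =>
    exact ⟨fun | _, .con hQ hP => ⟨_, .con hP hQ, .conComm _ _⟩,
      fun | _, .con hP hQ => ⟨_, .con hQ hP, .conComm _ _⟩⟩
  | disAssoc P Q R =>
    exact ⟨fun | _, .dis hP (.dis hQ hR) => ⟨_, .dis (.dis hP hQ) hR, .disAssoc _ _ _⟩,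
      fun | _, .dis (.dis hP hQ) hR => ⟨_, .dis hP (.dis hQ hR), (Equiv.disAssoc _ _ _).symm⟩⟩
  | conAssoc P Q R =>
    exact ⟨fun | _, .con hP (.con hQ hR) => ⟨_, .con (.con hP hQ) hR, .conAssoc _ _ _⟩,
      fun | _, .con (.con hP hQ) hR => ⟨_, .con hP (.con hQ hR), (Equiv.conAssoc _ _ _).symm⟩⟩
  | ttDis =>
    exact ⟨fun | _, .tt => ⟨_, .dis .tt .tt, .ttDis⟩,
      fun | _, .dis .tt .tt => ⟨_, .tt, Equiv.ttDis.symm⟩⟩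
  | ffCon =>
    exact ⟨fun | _, .ff => ⟨_, .con .ff .ff, .ffCon⟩,
      fun | _, .con .ff .ff => ⟨_, .ff, Equiv.ffCon.symm⟩⟩
  | ffDis P =>
    exact ⟨fun P' hP => ⟨_, .dis .ff hP, .ffDis P'⟩,
      fun | _, .dis .ff hP => ⟨_, hP, (Equiv.ffDis _).symm⟩⟩
  | ttCon P =>
    exact ⟨fun P' hP => ⟨_, .con .tt hP, .ttCon P'⟩,
      fun | _, .con .tt hP => ⟨_, hP, (Equiv.ttCon _).symm⟩⟩
  | disCongr _ _ ih₁ ih₂ => exact ⟨hL.disCongr ih₁.1 ih₂.1, hL.disCongr ih₁.2 ih₂.2⟩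
  | conCongr _ _ ih₁ ih₂ => exact ⟨hL.conCongr ih₁.1 ih₂.1, hL.conCongr ih₁.2 ih₂.2⟩

theorem F.isAtom.negF : ∀ {A : F}, A.isAtom → A.negF.isAtom
  | .pos _, _ | .neg _, _ => trivial

namespace Lifts

variable {Rs : Set Rule}

theorem switch (hs : .s ∈ Rs) (P Q R : F) :
    Lifts (Deriv (Step Rs)) (.con P (.dis Q R)) (.dis (.con P Q) R)
  | _, .dis (.con hP hQ) hR => ⟨_, .con hP (.dis hQ hR), .of_rootStep hs (.s _ _ _)⟩

theorem medial (hm : .m ∈ Rs) (P Q R S : F) :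
    Lifts (Deriv (Step Rs)) (.dis (.con P Q) (.con R S)) (.con (.dis P R) (.dis Q S))
  | _, .con (.dis hP hR) (.dis hQ hS) =>
    ⟨_, .dis (.con hP hQ) (.con hR hS), .of_rootStep hm (.m _ _ _ _)⟩

theorem atomicIdentity (hai : .aiDown ∈ Rs) (haw : .awDown ∈ Rs) {A : F} (hA : A.isAtom) :
    Lifts (Deriv (Step Rs)) .tt (.dis A A.negF)
  | _, .dis hA' hN' => by
    refine ⟨.tt, .tt, ?_⟩
    obtain rfl | rfl := hA'.eq_or_eq_tt hA <;> obtain rfl | rfl := hN'.eq_or_eq_tt hA.negF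
    · exact .of_rootStep hai (.aiDown _ hA)
    · exact .atom_dis haw hA .tt
    · exact .dis_atom haw .tt hA.negF
    · exact .eqv Equiv.ttDis.symm

theorem atomicWeakening (haw : .awDown ∈ Rs) (hs : .s ∈ Rs) {A : F} (hA : A.isAtom) :
    Lifts (Deriv (Step Rs)) .ff A := fun A' hA' => by
  refine ⟨.ff, .ff, ?_⟩
  obtain rfl | rfl := hA'.eq_or_eq_tt hA
  · exact .of_rootStep haw (.awDown _ hA)
  · exact .ff_tt hs

theorem atomicContraction (hac : .acDown ∈ Rs) {A : F} (hA : A.isAtom) :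
    Lifts (Deriv (Step Rs)) (.dis A A) A := fun A' hA' => by
  refine ⟨.dis A' A', .dis hA' hA', ?_⟩
  obtain rfl | rfl := hA'.eq_or_eq_tt hA
  · exact .of_rootStep hac (.acDown _ hA)
  · exact .eqv .ttDis

end Lifts

theorem RootStep.lifts_ks {r : Rule} (hr : r ∈ KS) {P Q : F} (h : RootStep r P Q) :
    Lifts (Deriv (Step KS)) P Q := by
  cases h with
  | s P Q R => exact .switch hr P Q R
  | m P Q R S => exact .medial hr P Q R S
  | aiDown A hA => exact .atomicIdentity hr (by simp [KS]) hA
  | awDown A hA => exact .atomicWeakening hr (by simp [KS]) hA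
  | acDown A hA => exact .atomicContraction hr hA
  | _ => simp [KS] at hr

theorem Deriv.lifts_ks {P Q : F} (d : Deriv (Step KS) P Q) : Lifts (Deriv (Step KS)) P Q :=
  d.rel_of_isPrecongruence isPrecongruence.lifts
    (fun e => e.lifts_and_lifts_symm.1.mono .eqv) (fun hr h => h.lifts_ks hr)

theorem ks_atom_to_true_general (P : F) (C : Ctx) (h : Proof KS (C.fill P)) :
    Proof KS (C.fill .tt) := by
  obtain ⟨P', hP, toTrue⟩ := exists_atomsToTrue_deriv_tt (Rs := KS) (by simp [KS]) P
  have replaced : AtomsToTrue (C.fill P) (C.fill P') := AtomsToTrue.isPrecongruence.fill hP C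
  obtain ⟨_, ⟨⟩, proof⟩ := Deriv.lifts_ks h _ replaced
  exact proof.trans (toTrue.fill C)

/-- Let `a` be an atom and `C{ }` a context.  Every proof in the system KS of
`C{a}` can be transformed into a proof in KS of `C{t}`. -/
theorem ks_atom_to_true (A : F) (hA : A.isAtom) (C : Ctx)
    (h : Proof KS (C.fill A)) : Proof KS (C.fill .tt) := by
  exact ks_atom_to_true_general A C h

end DI
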